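/- arXiv:2105.07860 — 4 statements merged into one kernel-verified Lean document; each statement's English description precedes it below -/
import Mathlib

section
/- Let k be a field of characteristic p > 0, L = k[t]/(t^p − ω) for some ω ∈ k, and let ∂ denote the derivation dual to dt. Then for f ∈ L, the p-fold composition of the derivation f∂ equals C·f∂, where C ∈ k is the coefficient of t^(p−1) in the truncated polynomial f^(p−1). In particular every derivation of L over k is p-closed. -/
open Polynomial in
/-- Jacobi: the derivative of the characteristic polynomial is the trace of the adjugate. -/
theorem aux_derivative_charpoly {k n : Type*} [Field k] [Fintype n] [DecidableEq n]
    (A : Matrix n n k) :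
    derivative A.charpoly = Matrix.trace (Matrix.adjugate A.charmatrix) := by
  have key : ∀ M : Matrix n n k[X], derivative M.det =
      ∑ i, (M.updateRow i (fun j => derivative (M i j))).det := by
    intro M
    simp only [Matrix.det_apply', derivative_sum]
    rw [Finset.sum_comm]
    refine Finset.sum_congr rfl fun σ _ => ?_
    rw [← Finset.mul_sum, derivative_intCast_mul]
    congr 1
    -- reindex rows by columns through the permutation
    rw [derivative_prod_finset]
    rw [← Equiv.sum_comp σ (fun i => ∏ j, (M.updateRow i (fun j => derivative (M i j))) (σ j) j)]
    refine Finset.sum_congr rfl fun i _ => ?_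
    rw [← Finset.mul_prod_erase Finset.univ _ (Finset.mem_univ i), mul_comm]
    congr 1
    · simp
    · refine Finset.prod_congr rfl fun j hj => ?_
      rw [Matrix.updateRow_ne]
      exact fun h => (Finset.ne_of_mem_erase hj) (σ.injective h)
  rw [Matrix.charpoly, key, Matrix.trace]
  refine Finset.sum_congr rfl fun i _ => ?_
  rw [Matrix.diag_apply, Matrix.adjugate_apply]
  congr 2
  funext j
  by_cases h : i = j
  · subst h; simp
  · simp [Matrix.charmatrix_apply_ne _ _ _ h, Ne.symm h]

open Polynomial in
theorem aux_matrix {k n : Type*} [Field k] [Fintype n] [DecidableEq n] (p : ℕ) [hp : Fact p.Prime]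
    [CharP k p] (hn : Fintype.card n = p) (A : Matrix n n k)
    (htr : ∀ j, 0 < j → j < p - 1 → (A ^ j).trace = 0) :
    ∃ c : k, A ^ p = -(A ^ (p - 1)).trace • A + c • (1 : Matrix n n k) := by
  have hp2 := hp.out.two_le
  set B : ℕ → Matrix n n k := fun i => Matrix.of fun a b => (A.charmatrix.adjugate a b).coeff i
    with hB
  have hmul : A.charmatrix * A.charmatrix.adjugate = A.charpoly • (1 : Matrix n n k[X]) :=
    Matrix.mul_adjugate _
  have hexp : ∀ a b, (X : k[X]) * A.charmatrix.adjugate a b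
      - ∑ c, C (A a c) * A.charmatrix.adjugate c b = A.charpoly * (1 : Matrix n n k[X]) a b := by
    intro a b
    have := congrFun (congrFun hmul a) b
    generalize A.charmatrix.adjugate = M at this ⊢
    rw [Matrix.charmatrix, Matrix.sub_mul] at this
    simpa [Matrix.mul_apply, Matrix.scalar_apply, Matrix.diagonal_apply] using this
  have hone : ∀ a b, (1 : Matrix n n k[X]) a b = C ((1 : Matrix n n k) a b) := by
    intro a b; by_cases h : a = b <;> simp [h, Matrix.one_apply]
  have hrec : ∀ i, B i = A * B (i + 1) + A.charpoly.coeff (i + 1) • (1 : Matrix n n k) := by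
    intro i
    ext a b
    have := congrArg (fun q => q.coeff (i + 1)) (hexp a b)
    simp only [coeff_sub, coeff_X_mul, finsetSum_coeff, coeff_C_mul, hone, coeff_mul_C] at this
    simp only [Matrix.add_apply, Matrix.smul_apply, Matrix.mul_apply, hB, Matrix.of_apply,
      smul_eq_mul]
    linear_combination this
  have hrec0 : A * B 0 = - A.charpoly.coeff 0 • (1 : Matrix n n k) := by
    ext a b
    have := congrArg (fun q => q.coeff 0) (hexp a b)
    simp only [coeff_sub, mul_coeff_zero, coeff_X_zero, finsetSum_coeff, coeff_C_mul, hone,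
      coeff_C_zero] at this
    simp only [Matrix.smul_apply, Matrix.mul_apply, hB, Matrix.of_apply,
      smul_eq_mul]
    linear_combination -this
  have htrB : ∀ i, (B i).trace = A.charpoly.coeff (i + 1) * ((i : k) + 1) := by
    intro i
    have := congrArg (fun q => q.coeff i) (aux_derivative_charpoly A)
    simp only [coeff_derivative] at this
    rw [this]
    simp [Matrix.trace, hB, finsetSum_coeff]
  have hdeg : A.charpoly.natDegree = p := by rw [Matrix.charpoly_natDegree_eq_dim, hn]
  have hlead : A.charpoly.coeff p = 1 := by
    have := A.charpoly_monic.coeff_natDegree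
    rwa [hdeg] at this
  have hzero : ∀ i, p ≤ i → B i = 0 := by
    obtain ⟨N, hN⟩ : ∃ N, ∀ i, N ≤ i → B i = 0 := by
      refine ⟨(Finset.univ.sup fun a => Finset.univ.sup fun b =>
        (A.charmatrix.adjugate a b).natDegree) + 1, fun i hi => ?_⟩
      ext a b
      simp only [hB, Matrix.of_apply, Matrix.zero_apply]
      apply coeff_eq_zero_of_natDegree_lt
      refine lt_of_le_of_lt ?_ (Nat.lt_of_succ_le hi)
      exact le_trans (Finset.le_sup (f := fun b => (A.charmatrix.adjugate a b).natDegree)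
        (Finset.mem_univ b)) (Finset.le_sup (f := fun a => Finset.univ.sup fun b =>
        (A.charmatrix.adjugate a b).natDegree) (Finset.mem_univ a))
    have : ∀ m i, p ≤ i → N ≤ i + m → B i = 0 := by
      intro m
      induction m with
      | zero => intro i _ h; exact hN i h
      | succ m ih =>
        intro i hi h
        rw [hrec i, ih (i + 1) (by omega) (by omega),
          coeff_eq_zero_of_natDegree_lt (by omega)]
        simp
    exact fun i hi => this N i hi (by omega)
  have hpk : (p : k) = 0 := CharP.cast_eq_zero k p
  have hstep : ∀ j, j + 1 < p → B (p - 1 - j) = A ^ j →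
      B (p - 1 - (j + 1)) = A ^ (j + 1) + A.charpoly.coeff (p - 1 - j) • (1 : Matrix n n k) ∧
      (A ^ (j + 1)).trace = -((j : k) + 1) * A.charpoly.coeff (p - 1 - j) := by
    intro j hj hBj
    have e : p - 1 - (j + 1) + 1 = p - 1 - j := by omega
    have h1 := hrec (p - 1 - (j + 1))
    rw [e, hBj, ← pow_succ'] at h1
    refine ⟨h1, ?_⟩
    have h2 := htrB (p - 1 - (j + 1))
    rw [h1, e, Matrix.trace_add, Matrix.trace_smul, Matrix.trace_one, hn, hpk] at h2
    have e2 : ((p - 1 - (j + 1) : ℕ) : k) + 1 = -((j : k) + 1) := by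
      have : (p - 1 - (j + 1) : ℕ) + 1 + (j + 1) = p := by omega
      have := congrArg (fun x : ℕ => (x : k)) this
      simp only [Nat.cast_add, Nat.cast_one, hpk] at this
      linear_combination this
    rw [e2] at h2
    simp only [smul_eq_mul, mul_zero, add_zero] at h2
    rw [h2]; ring
  have hnz : ∀ j : ℕ, j + 1 < p → ((j : k) + 1) ≠ 0 := by
    intro j hj h
    have h' : ((j + 1 : ℕ) : k) = 0 := by push_cast; exact h
    rw [CharP.cast_eq_zero_iff k p] at h'
    exact absurd (Nat.le_of_dvd (by omega) h') (by omega)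
  have hpow : ∀ j, j + 1 < p → B (p - 1 - j) = A ^ j := by
    intro j
    induction j with
    | zero =>
      intro _
      rw [hrec, Nat.sub_zero, show p - 1 + 1 = p by omega, hzero p le_rfl, hlead]; simp
    | succ j ih =>
      intro hj
      obtain ⟨h1, h2⟩ := hstep j (by omega) (ih (by omega))
      rw [htr (j + 1) (by omega) (by omega)] at h2
      have h3 : A.charpoly.coeff (p - 1 - j) = 0 := by
        rcases mul_eq_zero.mp h2.symm with h | h
        · exact absurd (neg_eq_zero.mp h) (hnz j (by omega))
        · exact h
      rw [h1, h3]; simp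
  obtain ⟨h1, h2⟩ := hstep (p - 2) (by omega) (hpow (p - 2) (by omega))
  rw [show p - 2 + 1 = p - 1 by omega, show p - 1 - (p - 2) = 1 by omega] at h1 h2
  rw [Nat.sub_self] at h1
  have e3 : ((p - 2 : ℕ) : k) + 1 = -1 := by
    have : (p - 2 : ℕ) + 1 + 1 = p := by omega
    have := congrArg (fun x : ℕ => (x : k)) this
    simp only [Nat.cast_add, Nat.cast_one, hpk] at this
    linear_combination this
  rw [e3] at h2
  refine ⟨-A.charpoly.coeff 0, ?_⟩
  rw [← hrec0, h1, h2, Matrix.mul_add, ← pow_succ', show p - 1 + 1 = p by omega]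
  simp

/-- Hockey stick: power sums of falling factorials over a full residue system. -/
theorem aux_sum {k : Type*} [Field k] (p : ℕ) [hp : Fact p.Prime] [CharP k p] (i : ℕ) (hi : i < p) :
    ∑ n ∈ Finset.range p, (n.descFactorial i : k) = if i = p - 1 then -1 else 0 := by
  have hp2 := hp.out.two_le
  have h : ∑ n ∈ Finset.range p, n.descFactorial i = i.factorial * p.choose (i + 1) := by
    have h0 : ∑ n ∈ Finset.range p, n.choose i = p.choose (i + 1) := by
      clear hi hp2 hp
      induction p with
      | zero => simp
      | succ p ih => rw [Finset.sum_range_succ, ih, Nat.choose_succ_succ, add_comm]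
    rw [← h0, Finset.mul_sum]
    exact Finset.sum_congr rfl fun n _ => Nat.descFactorial_eq_factorial_mul_choose n i
  rw [← Nat.cast_sum, h]
  split_ifs with h'
  · subst h'
    rw [show p - 1 + 1 = p by omega, Nat.choose_self, mul_one]
    have := ZMod.wilsons_lemma p
    have := congrArg (ZMod.castHom (dvd_refl p) k) this
    rwa [map_natCast, map_neg, map_one] at this
  · rw [CharP.cast_eq_zero_iff k p]
    exact Dvd.dvd.mul_left (hp.out.dvd_choose_self (by omega) (by omega)) _

open Polynomial in
theorem aux_shift {k : Type*} [Field k] (p : ℕ) (ω : k)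
    (hm : (X ^ p - C ω : k[X]).Monic) (hd : (X ^ p - C ω : k[X]).degree = p)
    (x : AdjoinRoot (X ^ p - C ω : k[X])) (i m : ℕ) (h : i + m < p) :
    (AdjoinRoot.modByMonicHom hm (x * AdjoinRoot.root _ ^ m)).coeff (i + m)
      = (AdjoinRoot.modByMonicHom hm x).coeff i := by
  have one : ∀ (y : AdjoinRoot (X ^ p - C ω : k[X])) (n : ℕ), n + 1 < p →
      (AdjoinRoot.modByMonicHom hm (y * AdjoinRoot.root _)).coeff (n + 1)
      = (AdjoinRoot.modByMonicHom hm y).coeff n := by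
    intro y n hn
    obtain ⟨v, rfl⟩ := AdjoinRoot.mk_surjective y
    rw [AdjoinRoot.modByMonicHom_mk]
    set u := v %ₘ (X ^ p - C ω) with hu
    have hv : AdjoinRoot.mk (X ^ p - C ω) v = AdjoinRoot.mk (X ^ p - C ω) u := by
      have := AdjoinRoot.mk_leftInverse hm (AdjoinRoot.mk _ v)
      rw [AdjoinRoot.modByMonicHom_mk] at this
      exact this.symm
    have hud : u.degree < p := by
      have := degree_modByMonic_lt v hm
      rwa [hd] at this
    rw [hv, ← AdjoinRoot.mk_X, ← map_mul, AdjoinRoot.modByMonicHom_mk]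
    have key := (div_modByMonic_unique (f := u * X) (C (u.coeff (p - 1)))
      (u * X - C (u.coeff (p - 1)) * (X ^ p - C ω)) hm ⟨by ring, by
        rw [hd, degree_lt_iff_coeff_zero]
        intro m hpm
        obtain ⟨m, rfl⟩ : ∃ l, m = l + 1 := ⟨m - 1, by omega⟩
        rw [coeff_sub, coeff_mul_X, coeff_C_mul, coeff_sub, coeff_X_pow, coeff_C_succ]
        by_cases hmp : m + 1 = p
        · subst hmp; simp
        · rw [if_neg hmp, (degree_lt_iff_coeff_zero _ _).mp hud m (by omega)]; simp⟩).2
    rw [key, coeff_sub, coeff_mul_X, coeff_C_mul, coeff_sub, coeff_X_pow, coeff_C_succ,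
      if_neg (by omega)]
    simp
  induction m with
  | zero => simp
  | succ m ih => rw [pow_succ, ← mul_assoc, ← add_assoc, one _ _ (by omega), ih (by omega)]

open Polynomial in
theorem aux_op {k : Type*} [Field k] (P F : k[X]) (D : Derivation k (AdjoinRoot P) (AdjoinRoot P))
    (hF : AdjoinRoot.mk P F = D (AdjoinRoot.root P)) (j : ℕ) :
    ∃ u : ℕ → k[X], u j = F ^ j ∧ (∀ i, j < i → u i = 0) ∧ ∀ q : k[X],
      (D.toLinearMap ^ j) (AdjoinRoot.mk P q) =
        AdjoinRoot.mk P (∑ i ∈ Finset.range (j + 1), u i * derivative^[i] q) := by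
  have hD : ∀ q, D (AdjoinRoot.mk P q) = AdjoinRoot.mk P (F * derivative q) := by
    intro q
    rw [map_mul, hF, ← AdjoinRoot.aeval_eq, Derivation.map_aeval, AdjoinRoot.aeval_eq,
      smul_eq_mul, mul_comm]
  induction j with
  | zero => exact ⟨fun i => if i = 0 then 1 else 0, by simp, by intro i hi; simp; omega, by simp⟩
  | succ j ih =>
    obtain ⟨u, hu, hu0, hq⟩ := ih
    refine ⟨fun i => F * derivative (u i) + (if i = 0 then 0 else F * u (i - 1)), ?_, ?_, ?_⟩
    · simp [hu0 (j + 1) (by omega), hu, pow_succ']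
    · intro i hi
      simp [hu0 i (by omega), hu0 (i - 1) (by omega)]
    · intro q
      rw [pow_succ', Module.End.mul_apply, hq]
      refine (hD _).trans ?_
      congr 1
      simp only [add_mul, Finset.sum_add_distrib, derivative_sum, derivative_mul]
      rw [mul_add, Finset.mul_sum, Finset.mul_sum, Finset.sum_range_succ (fun i => F * derivative (u i) * _),
        hu0 (j + 1) (by omega), Finset.sum_range_succ' (fun i => (if i = 0 then _ else _) * _)]
      simp only [mul_add, Finset.sum_add_distrib, ← Function.iterate_succ_apply' derivative]
      simp [mul_assoc]

open Polynomial in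
theorem aux_trace {k : Type*} [Field k] (p : ℕ) [hp : Fact p.Prime] [CharP k p] (ω : k)
    (hm : (X ^ p - C ω : k[X]).Monic) (hd : (X ^ p - C ω : k[X]).natDegree = p) (F : k[X])
    (D : Derivation k (AdjoinRoot (X ^ p - C ω : k[X])) (AdjoinRoot (X ^ p - C ω : k[X])))
    (hF : AdjoinRoot.mk _ F = D (AdjoinRoot.root _)) (j : ℕ) (hj : j < p) :
    LinearMap.trace k _ (D.toLinearMap ^ j) = if j = p - 1 then
      -(AdjoinRoot.modByMonicHom hm (AdjoinRoot.mk _ F ^ (p - 1))).coeff (p - 1) else 0 := by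
  have hdd : (X ^ p - C ω : k[X]).degree = p := by
    rw [degree_eq_natDegree hm.ne_zero, hd]
  obtain ⟨u, hu, -, hq⟩ := aux_op _ F D hF j
  have h1 : LinearMap.trace k _ (D.toLinearMap ^ j) = ∑ n ∈ Finset.range p,
      (AdjoinRoot.modByMonicHom hm ((D.toLinearMap ^ j) (AdjoinRoot.root _ ^ n))).coeff n := by
    rw [LinearMap.trace_eq_matrix_trace k (AdjoinRoot.powerBasis' hm).basis, Matrix.trace,
      ← Finset.sum_congr (congrArg Finset.range hd) (fun _ _ => rfl), ← Fin.sum_univ_eq_sum_range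
      (fun n => (AdjoinRoot.modByMonicHom hm
        ((D.toLinearMap ^ j) (AdjoinRoot.root _ ^ n))).coeff n)]
    refine Finset.sum_congr rfl fun i _ => ?_
    rw [Matrix.diag_apply, LinearMap.toMatrix_apply, PowerBasis.basis_eq_pow]
    rfl
  have h2 : ∀ n ∈ Finset.range p,
      (AdjoinRoot.modByMonicHom hm ((D.toLinearMap ^ j) (AdjoinRoot.root _ ^ n))).coeff n
      = ∑ i ∈ Finset.range (j + 1), (n.descFactorial i : k) *
        (AdjoinRoot.modByMonicHom hm (AdjoinRoot.mk _ (u i))).coeff i := by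
    intro n hn
    rw [Finset.mem_range] at hn
    rw [← AdjoinRoot.mk_X, ← map_pow, hq, map_sum, map_sum, finsetSum_coeff]
    refine Finset.sum_congr rfl fun i _ => ?_
    rw [iterate_derivative_X_pow_eq_natCast_mul]
    by_cases hin : i ≤ n
    · have e : AdjoinRoot.mk (X ^ p - C ω : k[X]) (u i * ((n.descFactorial i : k[X]) * X ^ (n - i)))
          = (n.descFactorial i : k) • (AdjoinRoot.mk _ (u i) * AdjoinRoot.root _ ^ (n - i)) := by
        rw [Algebra.smul_def]
        simp only [map_mul, map_pow, AdjoinRoot.mk_X, map_natCast]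
        ring
      rw [e, map_smul, coeff_smul, smul_eq_mul]
      congr 1
      have := aux_shift p ω hm hdd (AdjoinRoot.mk _ (u i)) i (n - i) (by omega)
      rwa [show i + (n - i) = n by omega] at this
    · rw [Nat.descFactorial_eq_zero_iff_lt.mpr (by omega)]
      simp
  rw [h1, Finset.sum_congr rfl h2, Finset.sum_comm]
  simp_rw [← Finset.sum_mul]
  rw [Finset.sum_range_succ, Finset.sum_eq_zero, zero_add, aux_sum p j hj, hu]
  · split_ifs with h
    · subst h; simp
    · simp
  · intro i hi
    rw [Finset.mem_range] at hi
    rw [aux_sum p i (by omega), if_neg (by omega), zero_mul]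


set_option maxHeartbeats 1000000 in
/-- Let `L = k[t]/(t^p - ω)` and let `D` be a `k`-derivation of `L`, so `D = f∂` with
`f = D t`.  If `g` is the truncated-polynomial representative (of degree `< p`) of
`f^(p-1)`, then the `p`-fold composition of `D` equals `C • D` where `C = g.coeff (p-1)`
is the coefficient of `t^(p-1)` in `f^(p-1)`; in particular `D` is `p`-closed. -/
theorem stmt3 {k : Type*} [Field k] (p : ℕ) [Fact p.Prime] [CharP k p] (ω : k)
    (D : Derivation k (AdjoinRoot (Polynomial.X ^ p - Polynomial.C ω))
      (AdjoinRoot (Polynomial.X ^ p - Polynomial.C ω)))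
    (g : Polynomial k) (hdeg : g.degree < p)
    (hg : AdjoinRoot.mk (Polynomial.X ^ p - Polynomial.C ω) g
      = D (AdjoinRoot.root (Polynomial.X ^ p - Polynomial.C ω)) ^ (p - 1)) :
    D.toLinearMap ^ p = g.coeff (p - 1) • D.toLinearMap ∧
    ∃ c : k, D.toLinearMap ^ p = c • D.toLinearMap := by
  have hp := (Fact.out : p.Prime)
  have hp2 := hp.two_le
  have hm : (Polynomial.X ^ p - Polynomial.C ω : Polynomial k).Monic :=
    Polynomial.monic_X_pow_sub_C ω hp.ne_zero
  have hd : (Polynomial.X ^ p - Polynomial.C ω : Polynomial k).natDegree = p :=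
    Polynomial.natDegree_X_pow_sub_C
  obtain ⟨F, hF⟩ := AdjoinRoot.mk_surjective
    (D (AdjoinRoot.root (Polynomial.X ^ p - Polynomial.C ω)))
  have htr := aux_trace p ω hm hd F D hF
  have hgc : (AdjoinRoot.modByMonicHom hm (AdjoinRoot.mk _ F ^ (p - 1))) = g := by
    rw [hF, ← hg, AdjoinRoot.modByMonicHom_mk, Polynomial.modByMonic_eq_self_iff hm,
      Polynomial.degree_eq_natDegree hm.ne_zero, hd]
    exact hdeg
  have main : D.toLinearMap ^ p = g.coeff (p - 1) • D.toLinearMap := by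
    set b := (AdjoinRoot.powerBasis' hm).basis
    have htm : ∀ j, (LinearMap.toMatrix b b D.toLinearMap ^ j).trace
        = LinearMap.trace k _ (D.toLinearMap ^ j) := by
      intro j
      rw [LinearMap.trace_eq_matrix_trace k b, LinearMap.toMatrix_pow]
    obtain ⟨c, hc⟩ := aux_matrix p (by rw [Fintype.card_fin]; exact hd)
      (LinearMap.toMatrix b b D.toLinearMap) (by
        intro j _ hj
        rw [htm, htr j (by omega), if_neg (by omega)])
    rw [htm, htr _ (by omega), if_pos rfl, hgc, neg_neg, LinearMap.toMatrix_pow,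
      ← LinearMap.toMatrix_one b, ← map_smul, ← map_smul, ← map_add] at hc
    have hc' := (LinearMap.toMatrix b b).injective hc
    have h1 := LinearMap.congr_fun hc' 1
    have hD1 : D.toLinearMap 1 = 0 := D.map_one_eq_zero
    have hDp : (D.toLinearMap ^ p) 1 = 0 := by
      rw [← pow_sub_one_mul hp.ne_zero D.toLinearMap, Module.End.mul_apply, hD1, map_zero]
    rw [hDp, LinearMap.add_apply, LinearMap.smul_apply, hD1, smul_zero, zero_add,
      LinearMap.smul_apply, Module.End.one_apply] at h1
    have hnt : Nontrivial (AdjoinRoot (Polynomial.X ^ p - Polynomial.C ω)) := by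
      apply AdjoinRoot.nontrivial
      rw [Polynomial.degree_eq_natDegree hm.ne_zero, hd]
      exact_mod_cast hp.ne_zero
    have hc0 : c = 0 := (smul_eq_zero.mp h1.symm).resolve_right one_ne_zero
    rw [hc', hc0, zero_smul, add_zero]
  exact ⟨main, _, main⟩
end

section
/- Let R be a commutative F_p-algebra with a derivation ∂ and f ∈ R. Then (∂ ∘ f∂ ∘ f∂ ∘ ⋯ ∘ f∂)(f) = −∂^(p−1)(f^(p−1)), where the left side is the composite operator with p−1 occurrences of ∂ alternating with multiplication by f, applied to f. -/
open Finset in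
theorem ef_leibniz {R : Type*} [CommRing R] (D : Derivation ℤ R R) (n : ℕ) (a b : R) :
    D^[n] (a * b) = ∑ ij ∈ antidiagonal n, n.choose ij.1 • (D^[ij.1] a * D^[ij.2] b) := by
  induction n with
  | zero => simp
  | succ n ih =>
    rw [sum_antidiagonal_choose_succ_nsmul (M := R) (fun i j => D^[i] a * D^[j] b) n]
    simp only [Function.iterate_succ_apply', ih, map_sum, map_nsmul, Derivation.leibniz, smul_add,
      sum_add_distrib, smul_eq_mul, add_right_inj]
    refine sum_congr rfl fun ⟨i, j⟩ hij ↦ ?_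
    rw [n.choose_symm_of_eq_add (mem_antidiagonal.1 hij).symm, mul_comm]

open Finset in
theorem ef_leibniz_p {R : Type*} [CommRing R] (p : ℕ) [hp : Fact p.Prime] [CharP R p]
    (D : Derivation ℤ R R) (a b : R) :
    D^[p] (a * b) = a * D^[p] b + b * D^[p] a := by
  have hp2 := hp.out.two_le
  rw [ef_leibniz, ← sum_subset (s₁ := {(0, p), (p, 0)})]
  · rw [sum_pair (by simp; omega)]
    simp [mul_comm]
  · intro x hx
    simp at hx
    rcases hx with rfl | rfl <;> simp
  · rintro ⟨i, j⟩ hx hx'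
    simp at hx hx'
    have : p ∣ p.choose i := hp.out.dvd_choose_self (by omega) (by omega)
    rw [nsmul_eq_mul, (CharP.cast_eq_zero_iff R p _).2 this, zero_mul]

/-- Coefficients of `(f∂)^n` as a combination of powers of `∂`. -/
def efCoeff {R : Type*} [CommRing R] (D : Derivation ℤ R R) (f : R) : ℕ → ℕ → R
  | 0, 0 => 1
  | 0, _ + 1 => 0
  | n + 1, 0 => f * D (efCoeff D f n 0)
  | n + 1, k + 1 => f * (D (efCoeff D f n (k + 1)) + efCoeff D f n k)

theorem efCoeff_gt {R : Type*} [CommRing R] (D : Derivation ℤ R R) (f : R) (n : ℕ) :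
    ∀ k, n < k → efCoeff D f n k = 0 := by
  induction n with
  | zero => intro k hk; cases k <;> simp_all [efCoeff]
  | succ n ih =>
    intro k hk
    cases k with
    | zero => omega
    | succ k => rw [efCoeff, ih _ (by omega), ih _ (by omega)]; simp

theorem efCoeff_self {R : Type*} [CommRing R] (D : Derivation ℤ R R) (f : R) (n : ℕ) :
    efCoeff D f n n = f ^ n := by
  induction n with
  | zero => simp [efCoeff]
  | succ n ih => rw [efCoeff, ih, efCoeff_gt _ _ _ _ (by omega)]; simp [pow_succ']

theorem efCoeff_zero {R : Type*} [CommRing R] (D : Derivation ℤ R R) (f : R) (n : ℕ) :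
    efCoeff D f (n + 1) 0 = 0 := by
  induction n with
  | zero => simp [efCoeff]
  | succ n ih => rw [efCoeff, ih]; simp

theorem ef_expand {R : Type*} [CommRing R] (D : Derivation ℤ R R) (f : R) (n : ℕ) (g : R) :
    (f • D)^[n] g = ∑ k ∈ Finset.range (n + 1), efCoeff D f n k * D^[k] g := by
  induction n with
  | zero => simp [efCoeff]
  | succ n ih =>
    rw [Function.iterate_succ_apply', ih, Finset.sum_range_succ' _ (n + 1)]
    simp only [efCoeff, Derivation.smul_apply, map_sum, Derivation.leibniz, smul_eq_mul,
      mul_add, add_mul, Finset.sum_add_distrib]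
    have h1 : ∑ k ∈ Finset.range (n + 1), D^[k] g * (f * D (efCoeff D f n k))
        = ∑ k ∈ Finset.range (n + 1), f * D (efCoeff D f n (k + 1)) * D^[k + 1] g
          + f * D (efCoeff D f n 0) * D^[0] g := by
      rw [← Finset.sum_range_succ' (fun k => f * D (efCoeff D f n k) * D^[k] g),
        Finset.sum_range_succ _ (n + 1), efCoeff_gt D f n (n + 1) (by omega)]
      simp only [map_zero, mul_zero, zero_mul, add_zero]
      exact Finset.sum_congr rfl fun k _ => by ring
    rw [h1]
    have h2 : ∑ k ∈ Finset.range (n + 1), efCoeff D f n k * (f * D (D^[k] g))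
        = ∑ k ∈ Finset.range (n + 1), f * efCoeff D f n k * D^[k + 1] g :=
      Finset.sum_congr rfl fun k _ => by rw [Function.iterate_succ_apply']; ring
    rw [h2]
    ring

theorem ef_iter_pow {R : Type*} [CommRing R] (D : Derivation ℤ R R) (x : R) (hx : D x = 1)
    (k j : ℕ) : D^[j] (x ^ k) = (k.descFactorial j : R) * x ^ (k - j) := by
  induction j with
  | zero => simp
  | succ j ih =>
    rw [Function.iterate_succ_apply', ih, Derivation.leibniz, Derivation.leibniz_pow, hx,
      Nat.descFactorial_succ, Nat.sub_sub]
    simp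
    ring

theorem ef_hochschild {R : Type*} [CommRing R] [IsDomain R] (p : ℕ) [hp : Fact p.Prime] [CharP R p]
    (D : Derivation ℤ R R) (f x : R) (hx : D x = 1) (g : R) :
    (f • D)^[p] g = f ^ p * D^[p] g + (f • D)^[p - 1] f * D g := by
  have hp2 := hp.out.two_le
  set E : R → R := fun g => (f • D)^[p] g - f ^ p * D^[p] g with hE
  have hmul : ∀ a b, E (a * b) = a * E b + b * E a := by
    intro a b
    simp only [hE, ef_leibniz_p p]
    ring
  have hpow : ∀ k, E (x ^ (k + 1)) = (k + 1 : ℕ) * x ^ k * E x := by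
    intro k
    induction k with
    | zero => simp
    | succ k ih => rw [pow_succ, hmul, ih]; push_cast; ring
  set c := efCoeff D f p with hc
  have hc0 : c 0 = 0 := by
    obtain ⟨q, rfl⟩ : ∃ q, p = q + 1 := ⟨p - 1, by omega⟩
    exact efCoeff_zero D f q
  have hsum : ∀ g, E g = ∑ k ∈ Finset.range p, c k * D^[k] g := by
    intro g
    simp only [hE, ef_expand D f p g, Finset.sum_range_succ, efCoeff_self, hc]
    ring
  have hEx : E x = c 1 := by
    rw [hsum, Finset.sum_eq_single 1]
    · simp [hx]
    · intro j _ hj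
      have := ef_iter_pow D x hx 1 j
      rw [pow_one] at this
      rcases Nat.eq_zero_or_pos j with rfl | h
      · simp [hc0]
      · rw [this, Nat.descFactorial_of_lt (by omega)]; simp
    · intro h; simp at h; omega
  have hck : ∀ k, 2 ≤ k → k < p → c k = 0 := by
    intro k
    induction k using Nat.strong_induction_on with
    | _ k ih =>
      intro h2 hkp
      have h1 := hsum (x ^ k)
      rw [← Finset.sum_subset (s₁ := {1, k})] at h1
      · rw [Finset.sum_pair (by omega), ef_iter_pow D x hx, ef_iter_pow D x hx] at h1
        obtain ⟨m, rfl⟩ : ∃ m, k = m + 1 := ⟨k - 1, by omega⟩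
        rw [hpow, hEx] at h1
        simp only [Nat.descFactorial_one, Nat.descFactorial_self, Nat.sub_self,
          Nat.add_sub_cancel, pow_zero, mul_one] at h1
        have h3 : c (m + 1) * ((m + 1).factorial : R) = 0 := by linear_combination -h1
        rcases mul_eq_zero.1 h3 with h | h
        · exact h
        · rw [CharP.cast_eq_zero_iff R p, hp.out.dvd_factorial] at h
          omega
      · intro j hj
        simp at hj ⊢
        omega
      · intro j hj hj'
        simp at hj hj'
        rcases lt_trichotomy j k with h | h | h
        · rcases Nat.eq_zero_or_pos j with rfl | h0
          · simp [hc0]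
          · rw [ih j h (by omega) (by omega), zero_mul]
        · omega
        · rw [ef_iter_pow D x hx, Nat.descFactorial_of_lt h]; simp
  have hEg : E g = c 1 * D g := by
    rw [hsum, Finset.sum_eq_single 1]
    · simp
    · intro j hj hj1
      simp at hj
      rcases Nat.eq_zero_or_pos j with rfl | h
      · simp [hc0]
      · rw [hck j (by omega) hj, zero_mul]
    · intro h; simp at h; omega
  have hEx2 : E x = (f • D)^[p - 1] f := by
    have h0 := ef_iter_pow D x hx 1 p
    rw [pow_one, Nat.descFactorial_of_lt (by omega)] at h0
    simp only [hE, h0]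
    obtain ⟨q, rfl⟩ : ∃ q, p = q + 1 := ⟨p - 1, by omega⟩
    rw [Function.iterate_succ_apply]
    simp [hx]
  rw [← hEx2, hEx, ← hEg]
  simp [hE]

theorem ef_domain {R : Type*} [CommRing R] [IsDomain R] (p : ℕ) [hp : Fact p.Prime] [CharP R p]
    (D : Derivation ℤ R R) (f x y : R) (hf : f ≠ 0) (hx : D x = 1) (hy : D y = f ^ (p - 1)) :
    D ((f • D)^[p - 2] f) = - D^[p - 1] (f ^ (p - 1)) := by
  have h := ef_hochschild p D f x hx y
  obtain ⟨q, rfl⟩ : ∃ q, p = q + 2 := ⟨p - 2, by have := hp.out.two_le; omega⟩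
  have hz : (f • D)^[q + 2] y = 0 := by
    have h1 : (f • D) y = f ^ (q + 2) := by
      rw [Derivation.smul_apply, hy]; simp [pow_succ']
    have h2 : (f • D) (f ^ (q + 2)) = 0 := by
      rw [Derivation.leibniz_pow, nsmul_eq_mul, CharP.cast_eq_zero, zero_mul]
    rw [Function.iterate_succ_apply, Function.iterate_succ_apply, h1, h2]
    exact iterate_map_zero (f • D) q
  rw [hz, Function.iterate_succ_apply D, hy, show q + 2 - 1 = q + 1 by omega,
    Function.iterate_succ_apply' (f • D), Derivation.smul_apply, smul_eq_mul] at h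
  rw [show q + 2 - 1 = q + 1 by omega, show q + 2 - 2 = q by omega]
  have h4 : f ^ (q + 2) * (D ((f • D)^[q] f) + D^[q + 1] (f ^ (q + 1))) = 0 := by
    rw [h]; ring
  rcases mul_eq_zero.1 h4 with h5 | h5
  · exact absurd (pow_eq_zero_iff (by omega) |>.1 h5) hf
  · exact eq_neg_of_add_eq_zero_left h5

theorem ef_natural {R S : Type*} [CommRing R] [CommRing S] (D : Derivation ℤ R R)
    (D' : Derivation ℤ S S) (φ : R →+* S) (h : ∀ r, φ (D r) = D' (φ r)) (f : R) (m n k : ℕ) :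
    φ (D ((f • D)^[m] f) + D^[n] (f ^ k)) =
      D' ((φ f • D')^[m] (φ f)) + D'^[n] (φ f ^ k) := by
  have h1 : Function.Semiconj φ D D' := h
  have h2 : Function.Semiconj φ ⇑(f • D) ⇑(φ f • D') := fun r => by
    simp [h]
  rw [map_add, h, (h2.iterate_right m).eq, (h1.iterate_right n).eq, map_pow]

theorem ef_aeval {σ S : Type*} [CommRing S] (p : ℕ) [Fact p.Prime] [Algebra (ZMod p) S]
    (e : σ → MvPolynomial σ (ZMod p)) (v : σ → S)
    (D' : Derivation ℤ S S) (h : ∀ i, MvPolynomial.aeval v (e i) = D' (v i))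
    (r : MvPolynomial σ (ZMod p)) :
    MvPolynomial.aeval v (((MvPolynomial.mkDerivation (ZMod p) e).restrictScalars ℤ) r)
      = D' (MvPolynomial.aeval v r) := by
  induction r using MvPolynomial.induction_on with
  | C a =>
    obtain ⟨n, rfl⟩ := ZMod.natCast_zmod_surjective a
    simp
  | add a b ha hb => simp only [map_add, ha, hb]
  | mul_X a i ha =>
    rw [Derivation.leibniz, map_mul, Derivation.leibniz, map_add, smul_eq_mul, smul_eq_mul,
      map_mul, map_mul, ha]
    simp [h]

/-- Evans–Fuchs formula: for a derivation `∂` of a commutative ring `R` of prime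
characteristic `p` and `f ∈ R`, the composite operator `∂ ∘ f∂ ∘ ⋯ ∘ f∂`
(with `p - 1` occurrences of `∂` in total) applied to `f` equals `-∂^(p-1)(f^(p-1))`. -/
theorem stmt5 {R : Type*} [CommRing R] (p : ℕ) [Fact p.Prime] [CharP R p]
    (d : Derivation ℤ R R) (f : R) :
    (d.toLinearMap * (f • d.toLinearMap) ^ (p - 2)) f
      = - ((d.toLinearMap ^ (p - 1)) (f ^ (p - 1))) := by
  let _ : Algebra (ZMod p) R := ZMod.algebra R p
  let eU : ℕ → MvPolynomial ℕ (ZMod p) := fun i => MvPolynomial.X (i + 1)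
  let eT : ℕ ⊕ Bool → MvPolynomial (ℕ ⊕ Bool) (ZMod p) :=
    Sum.elim (fun i => MvPolynomial.X (Sum.inl (i + 1)))
      (fun b => bif b then 1 else MvPolynomial.X (Sum.inl 0) ^ (p - 1))
  let DU := (MvPolynomial.mkDerivation (ZMod p) eU).restrictScalars ℤ
  let DT := (MvPolynomial.mkDerivation (ZMod p) eT).restrictScalars ℤ
  let vT : ℕ → MvPolynomial (ℕ ⊕ Bool) (ZMod p) := fun i => MvPolynomial.X (Sum.inl i)
  let vR : ℕ → R := fun i => d^[i] f
  have hDT : ∀ i, DT (MvPolynomial.X i) = eT i := fun i =>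
    MvPolynomial.mkDerivation_X (R := ZMod p) eT i
  have hT : ∀ r, MvPolynomial.aeval vT (DU r) = DT (MvPolynomial.aeval vT r) :=
    ef_aeval p eU vT DT (fun i => by
      simp only [eU, vT, MvPolynomial.aeval_X]
      exact (hDT (Sum.inl i)).symm)
  have hR : ∀ r, MvPolynomial.aeval vR (DU r) = d (MvPolynomial.aeval vR r) :=
    ef_aeval p eU vR d (fun i => by simp [eU, vR, -Function.iterate_succ,
      Function.iterate_succ_apply'])
  have kT := ef_natural DU DT (MvPolynomial.aeval vT).toRingHom hT (MvPolynomial.X 0)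
    (p - 2) (p - 1) (p - 1)
  have kR := ef_natural DU d (MvPolynomial.aeval vR).toRingHom hR (MvPolynomial.X 0)
    (p - 2) (p - 1) (p - 1)
  have main := ef_domain p DT (MvPolynomial.X (Sum.inl 0)) (MvPolynomial.X (Sum.inr true))
    (MvPolynomial.X (Sum.inr false)) (MvPolynomial.X_ne_zero _) (hDT (Sum.inr true))
    (hDT (Sum.inr false))
  have e0 : (MvPolynomial.aeval vT).toRingHom (MvPolynomial.X 0 : MvPolynomial ℕ (ZMod p))
    = MvPolynomial.X (Sum.inl 0) := by simp [vT]
  have e1 : (MvPolynomial.aeval vR).toRingHom (MvPolynomial.X 0 : MvPolynomial ℕ (ZMod p))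
    = f := by simp [vR]
  rw [e0, main, neg_add_cancel] at kT
  have inj0 :=
    MvPolynomial.rename_injective (R := ZMod p) (Sum.inl : ℕ → ℕ ⊕ Bool) Sum.inl_injective
  have inj : Function.Injective (MvPolynomial.aeval (R := ZMod p) vT).toRingHom := by
    have e : MvPolynomial.aeval (R := ZMod p) vT = MvPolynomial.rename Sum.inl := by
      ext i; simp [vT]
    rw [e]
    exact inj0
  rw [(map_eq_zero_iff _ inj).1 kT, map_zero, e1] at kR
  have := eq_neg_of_add_eq_zero_left kR.symm
  rw [Module.End.mul_apply, Module.End.pow_apply, Module.End.pow_apply]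
  exact this
end

section
/- Let k ⊂ E be a field extension with k algebraically closed, let h be a finite-dimensional restricted Lie algebra over k, g a restricted Lie algebra over E, and h → g an injective k-linear homomorphism of restricted Lie algebras. If every vector of g is p-closed (over E), then every vector of h is p-closed over k. -/
/-- A relative form of Lang's theorem: a `p`-semilinear map of a finite-dimensional space
over an algebraically closed field has a nonzero fixed vector modulo `W`. -/
theorem exists_fixed_mod {k V : Type*} [Field k] [IsAlgClosed k] (p : ℕ) [Fact p.Prime]
    [AddCommGroup V] [Module k V] [FiniteDimensional k V]
    (F : V →+ V) (hF : ∀ (c : k) (v : V), F (c • v) = c ^ p • F v)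
    (W : Submodule k V) (hW : ∀ v, F v ∈ W ↔ v ∈ W) (x : V) (hx : x ∉ W) :
    ∃ v, v ∉ W ∧ F v - v ∈ W := by
  classical
  have hp2 : 2 ≤ p := (Fact.out : p.Prime).two_le
  let X : ℕ → V := fun n => F^[n] x
  have hXs : ∀ n, F (X n) = X (n + 1) := fun n => (Function.iterate_succ_apply' F n x).symm
  have hXW : ∀ n, X n ∉ W := by
    intro n
    induction n with
    | zero => exact hx
    | succ n ih => rw [← hXs, hW]; exact ih
  let S : ℕ → Submodule k V := fun n => W ⊔ Submodule.span k (X '' (Finset.range n : Set ℕ))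
  have hSmono : Monotone S := by
    intro a b hab
    apply sup_le_sup_left
    apply Submodule.span_mono
    apply Set.image_mono
    exact_mod_cast Finset.range_mono hab
  have hXS : ∀ i n, i < n → X i ∈ S n := fun i n h =>
    (le_sup_right : _ ≤ S n) (Submodule.subset_span ⟨i, by simpa using h, rfl⟩)
  have hex : ∃ n, X n ∈ S n := by
    obtain ⟨n, hn⟩ := monotone_stabilizes_iff_noetherian.2
      (inferInstance : IsNoetherian k V) ⟨S, hSmono⟩
    refine ⟨n, ?_⟩
    have h1 : S n = S (n + 1) := hn (n + 1) (Nat.le_succ n)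
    rw [h1]
    exact hXS n (n + 1) (Nat.lt_succ_self n)
  obtain ⟨n, hn, hmin⟩ : ∃ n, X n ∈ S n ∧ ∀ j < n, X j ∉ S j :=
    ⟨Nat.find hex, Nat.find_spec hex, fun j hj => Nat.find_min hex hj⟩
  obtain _ | m := n
  · exact absurd (by simpa [S] using hn) (hXW 0)
  obtain ⟨w, hw, s, hs, hws⟩ := Submodule.mem_sup.1 hn
  obtain ⟨b, rfl⟩ : ∃ b : ℕ → k, ∑ i ∈ Finset.range (m + 1), b i • X i = s := by
    obtain ⟨b, hb⟩ := (Submodule.mem_span_image_finset_iff_exists_fun k).1 hs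
    refine ⟨fun i => if h : i ∈ Finset.range (m + 1) then b ⟨i, h⟩ else 0, ?_⟩
    rw [← hb, ← Finset.sum_coe_sort]
    exact Finset.sum_congr rfl fun i _ => by
      beta_reduce
      rw [dif_pos i.2]
  -- the polynomials `q i`
  let q : ℕ → Polynomial k := fun i => Nat.rec (Polynomial.C (b 0))
    (fun j r => Polynomial.X ^ (p * (p - 1)) * r ^ p + Polynomial.C (b (j + 1))) i
  have hq0 : q 0 = Polynomial.C (b 0) := rfl
  have hqs : ∀ j, q (j + 1) =
    Polynomial.X ^ (p * (p - 1)) * (q j) ^ p + Polynomial.C (b (j + 1)) := fun j => rfl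
  have hpp : p * (p - 1) ≠ 0 := Nat.mul_ne_zero (by omega) (by omega)
  have hqz : ∀ j, q j = 0 → ∀ i ≤ j, b i = 0 := by
    intro j
    induction j with
    | zero =>
      intro h i hi
      obtain rfl : i = 0 := by omega
      rw [hq0] at h
      simpa using h
    | succ j ih =>
      intro h i hi
      rw [hqs] at h
      have hb : b (j + 1) = 0 := by
        have := congrArg (Polynomial.eval 0) h
        simpa [hpp, show p ≠ 0 by omega, show p - 1 ≠ 0 by omega] using this
      rw [hb, Polynomial.C_0, add_zero] at h
      have hqj : q j = 0 := by
        rcases mul_eq_zero.1 h with h | h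
        · exact absurd h (pow_ne_zero _ Polynomial.X_ne_zero)
        · exact pow_eq_zero_iff (by omega) |>.1 h
      rcases Nat.lt_or_ge j i with h1 | h1
      · obtain rfl : i = j + 1 := by omega
        exact hb
      · exact ih hqj i h1
  have hqm : q m ≠ 0 := by
    intro h
    apply hXW (m + 1)
    rw [← hws, Finset.sum_eq_zero, add_zero]
    · exact hw
    · intro i hi
      rw [hqz m h i (by simpa [Nat.lt_succ_iff] using hi), zero_smul]
  obtain ⟨t, ht⟩ : ∃ t : k, t ^ (p - 1) * (q m).eval t = 1 := by
    obtain ⟨t, ht⟩ := IsAlgClosed.exists_root (Polynomial.X ^ (p - 1) * q m - Polynomial.C 1) (by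
      have hd : 0 < (Polynomial.X ^ (p - 1) * q m).degree := by
        rw [Polynomial.degree_mul, Polynomial.degree_X_pow, Polynomial.degree_eq_natDegree hqm]
        norm_cast
        omega
      rw [Polynomial.degree_sub_C hd]
      exact hd.ne')
    refine ⟨t, ?_⟩
    have := ht
    simp only [Polynomial.IsRoot, Polynomial.eval_sub, Polynomial.eval_mul, Polynomial.eval_pow,
      Polynomial.eval_X, Polynomial.eval_C] at this
    exact sub_eq_zero.1 this
  have ht0 : t ≠ 0 := by
    rintro rfl
    rw [zero_pow (by omega), zero_mul] at ht
    exact zero_ne_one ht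
  let c : ℕ → k := fun i => t ^ p * (q i).eval t
  have hc0 : c 0 = t ^ p * b 0 := by simp [c, hq0]
  have hcs : ∀ i, c (i + 1) = c i ^ p + t ^ p * b (i + 1) := by
    intro i
    simp only [c, hqs, Polynomial.eval_add, Polynomial.eval_mul, Polynomial.eval_pow,
      Polynomial.eval_X, Polynomial.eval_C]
    obtain ⟨r, rfl⟩ : ∃ r, p = r + 1 := ⟨p - 1, by omega⟩
    simp only [Nat.add_sub_cancel]
    ring
  have hcm : c m = t := by
    simp only [c]
    obtain ⟨r, hr⟩ : ∃ r, p = r + 1 := ⟨p - 1, by omega⟩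
    have : t ^ p = t * t ^ (p - 1) := by
      rw [hr, Nat.add_sub_cancel]; ring
    rw [this, mul_assoc, ht, mul_one]
  refine ⟨∑ i ∈ Finset.range (m + 1), c i • X i, ?_, ?_⟩
  · intro hv
    apply hmin m (Nat.lt_succ_self m)
    rw [Finset.sum_range_succ, hcm] at hv
    have h1 : ∑ i ∈ Finset.range m, c i • X i ∈ S m :=
      Submodule.sum_mem _ fun i hi => Submodule.smul_mem _ _ (hXS i m (Finset.mem_range.1 hi))
    have h2 := Submodule.sub_mem _ ((le_sup_left : W ≤ S m) hv) h1
    rw [add_sub_cancel_left] at h2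
    exact (Submodule.smul_mem_iff _ ht0).1 h2
  · have h1 : F (∑ i ∈ Finset.range (m + 1), c i • X i) =
        ∑ i ∈ Finset.range m, c i ^ p • X (i + 1) + t ^ p • X (m + 1) := by
      rw [map_sum, Finset.sum_range_succ, hF, hXs, hcm]
      congr 1
      exact Finset.sum_congr rfl fun i _ => by rw [hF, hXs]
    have h2 : F (∑ i ∈ Finset.range (m + 1), c i • X i) - ∑ i ∈ Finset.range (m + 1), c i • X i
        = t ^ p • w := by
      rw [h1, ← hws, Finset.sum_range_succ', Finset.sum_range_succ', hc0, smul_add, smul_add,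
        Finset.smul_sum]
      simp only [hcs, add_smul, Finset.sum_add_distrib, smul_smul]
      abel
    rw [h2]
    exact Submodule.smul_mem _ _ hw

/-- The heart of the matter; only additivity of `φ` is used. -/
theorem p_closed_aux {k E : Type*} [Field k] [IsAlgClosed k] [Field E]
    (p : ℕ) [Fact p.Prime] [CharP k p] [CharP E p]
    {H G : Type*} [AddCommGroup H] [Module k H] [FiniteDimensional k H]
    [AddCommGroup G] [Module E G]
    (pH : H → H) (pG : G → G)
    (hpH : ∀ (c : k) (x : H), pH (c • x) = c ^ p • pH x)
    (hpG : ∀ (c : E) (y : G), pG (c • y) = c ^ p • pG y)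
    (φ : H →+ G) (hinj : Function.Injective φ)
    (hφp : ∀ x : H, φ (pH x) = pG (φ x))
    (hG : ∀ y : G, ∃ α : E, pG y = α • y) :
    ∀ x : H, ∃ c : k, pH x = c • x := by
  classical
  intro x
  have hp2 : 2 ≤ p := (Fact.out : p.Prime).two_le
  -- a multiple by an element of the prime field
  have hprime : ∀ (r : E) (u v : H), r ^ p = r → φ u = r • φ v → ∃ c : k, u = c • v := by
    intro r u v hr huv
    have h1 := (Subfield.mem_bot_iff_pow_eq_self (F := E) (p := p)).2 hr
    obtain ⟨n, hn⟩ := (mem_bot_iff_intCast p E).1 h1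
    refine ⟨(n : k), hinj ?_⟩
    rw [huv, ← hn, Int.cast_smul_eq_zsmul, Int.cast_smul_eq_zsmul, map_zsmul]
  by_cases hx0 : x = 0
  · refine ⟨0, ?_⟩
    have := hpH 0 x
    rw [zero_smul, zero_pow (by omega), zero_smul] at this
    rw [hx0, this, smul_zero]
  have hroot : ∀ c : k, ∃ d : k, d ^ p = c := fun c => IsAlgClosed.exists_pow_nat_eq c (by omega)
  have hy0 : φ x ≠ 0 := fun h => hx0 (hinj (by rw [h, map_zero]))
  obtain ⟨α, hα⟩ := hG (φ x)
  by_cases hline : ∀ c : k, ∃ u : E, φ (c • x) = u • φ x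
  · -- the image of the line through `x` lies in one `E`-line
    by_contra hcon
    have hα0 : α ≠ 0 := by
      rintro rfl
      apply hcon
      refine ⟨0, hinj ?_⟩
      rw [hφp, hα, zero_smul, zero_smul, map_zero]
    let N : Submodule k H :=
      { carrier := {v | ∀ c : k, ∃ u : E, φ (c • v) = u • φ x}
        add_mem' := by
          intro a b ha hb c
          obtain ⟨u, hu⟩ := ha c
          obtain ⟨u', hu'⟩ := hb c
          exact ⟨u + u', by rw [smul_add, map_add, hu, hu', add_smul]⟩
        zero_mem' := fun c => ⟨0, by simp⟩
        smul_mem' := by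
          intro d a ha c
          obtain ⟨u, hu⟩ := ha (c * d)
          exact ⟨u, by rw [smul_smul, hu]⟩ }
    have hNu : ∀ v : N, ∃ u : E, φ (v : H) = u • φ x := by
      intro v
      obtain ⟨u, hu⟩ := v.2 1
      exact ⟨u, by rwa [one_smul] at hu⟩
    have hpu : ∀ (v : H) (u : E), φ v = u • φ x → φ (pH v) = (u ^ p * α) • φ x := by
      intro v u h
      rw [hφp, h, hpG, hα, smul_smul]
    have hNp : ∀ v ∈ N, pH v ∈ N := by
      intro v hv c
      obtain ⟨d, rfl⟩ := hroot c
      obtain ⟨u, hu⟩ := hv d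
      exact ⟨u ^ p * α, by rw [← hpH, hpu _ u hu]⟩
    let F : N →+ N :=
      { toFun := fun v => ⟨pH v, hNp v v.2⟩
        map_zero' := by
          apply Subtype.ext
          have := hpH 0 x
          rw [zero_smul, zero_pow (by omega), zero_smul] at this
          exact this
        map_add' := by
          intro a b
          apply Subtype.ext
          apply hinj
          obtain ⟨u, hu⟩ := hNu a
          obtain ⟨u', hu'⟩ := hNu b
          have h3 : φ ((a : H) + b) = (u + u') • φ x := by rw [map_add, hu, hu', add_smul]
          change φ (pH ((a : H) + b)) = φ (pH a + pH b)
          rw [map_add, hpu _ _ h3, hpu _ _ hu, hpu _ _ hu', ← add_smul, add_pow_char, add_mul] }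
    have hFv : ∀ v : N, ((F v : N) : H) = pH v := fun v => rfl
    have hFs : ∀ (c : k) (v : N), F (c • v) = c ^ p • F v := fun c v => Subtype.ext (hpH c v)
    have hFi : ∀ v : N, F v = 0 → v = 0 := by
      intro v hv
      obtain ⟨u, hu⟩ := hNu v
      have h1 := hpu _ _ hu
      rw [← hFv, hv, ZeroMemClass.coe_zero, map_zero] at h1
      have h2 := (smul_eq_zero.1 h1.symm).resolve_right hy0
      have h3 : u = 0 := (pow_eq_zero_iff (by omega)).1 ((mul_eq_zero.1 h2).resolve_right hα0)
      apply Subtype.ext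
      apply hinj
      rw [hu, h3, zero_smul, ZeroMemClass.coe_zero, map_zero]
    let x' : N := ⟨x, hline⟩
    have hx' : x' ≠ 0 := fun h => hx0 (congrArg Subtype.val h)
    obtain ⟨e, he0, he⟩ := exists_fixed_mod p F hFs ⊥ (fun v => by
      rw [Submodule.mem_bot, Submodule.mem_bot]
      exact ⟨hFi v, fun h => by rw [h, map_zero]⟩) x' (by simpa using hx')
    rw [Submodule.mem_bot] at he0 he
    replace he : F e = e := sub_eq_zero.1 he
    let W : Submodule k N := Submodule.span k {e}
    have hW : ∀ v, F v ∈ W ↔ v ∈ W := by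
      intro v
      simp only [W, Submodule.mem_span_singleton]
      constructor
      · rintro ⟨a, ha⟩
        obtain ⟨d, rfl⟩ := hroot a
        refine ⟨d, ?_⟩
        rw [← sub_eq_zero]
        apply hFi
        rw [map_sub, hFs, he, ha, sub_self]
      · rintro ⟨a, rfl⟩
        exact ⟨a ^ p, by rw [hFs, he]⟩
    have hxW : x' ∉ W := by
      intro h
      have h' := (hW _).2 h
      obtain ⟨a, ha⟩ := Submodule.mem_span_singleton.1 h
      obtain ⟨a', ha'⟩ := Submodule.mem_span_singleton.1 h'
      have ha0 : a ≠ 0 := by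
        rintro rfl
        rw [zero_smul] at ha
        exact hx' ha.symm
      apply hcon
      refine ⟨a' * a⁻¹, ?_⟩
      have h3 : F x' = (a' * a⁻¹) • x' := by
        rw [← ha', ← ha, smul_smul, mul_assoc, inv_mul_cancel₀ ha0, mul_one]
      exact congrArg Subtype.val h3
    obtain ⟨z, hzW, hz⟩ := exists_fixed_mod p F hFs W hW x' hxW
    obtain ⟨a, ha⟩ := Submodule.mem_span_singleton.1 hz
    -- correct `z` to a fixed vector
    obtain ⟨d, hd⟩ : ∃ d : k, d ^ p - d + a = 0 := by
      have hdeg : (Polynomial.X ^ p + (-Polynomial.X + Polynomial.C a) :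
          Polynomial k).degree = p := by
        rw [Polynomial.degree_add_eq_left_of_degree_lt, Polynomial.degree_X_pow]
        rw [Polynomial.degree_X_pow]
        refine lt_of_le_of_lt (b := (1 : WithBot ℕ)) ?_ (by exact_mod_cast hp2)
        compute_degree
      obtain ⟨d, hd⟩ := IsAlgClosed.exists_root _ (by
        rw [hdeg]
        exact_mod_cast (show p ≠ 0 by omega))
      refine ⟨d, ?_⟩
      have := hd
      simp only [Polynomial.IsRoot, Polynomial.eval_add, Polynomial.eval_neg, Polynomial.eval_pow,
        Polynomial.eval_X, Polynomial.eval_C] at this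
      rw [← this]
      ring
    have hfix : F (z + d • e) = z + d • e := by
      have h1 : F z = z + a • e := by rw [ha]; abel
      have h2 : d ^ p = d - a := by linear_combination hd
      rw [map_add, hFs, he, h1, h2, sub_smul]
      abel
    obtain ⟨u, hu⟩ := hNu e
    obtain ⟨u', hu'⟩ := hNu (z + d • e)
    have hfu : ∀ (v : N) (r : E), F v = v → φ (v : H) = r • φ x → r ^ p * α = r := by
      intro v r hv hr
      have h1 := hpu _ _ hr
      rw [← hFv, hv, hr] at h1
      exact (smul_left_injective E hy0 h1).symm
    have hu1 := hfu _ _ he hu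
    have hu2 := hfu _ _ hfix hu'
    have hu0 : u ≠ 0 := by
      rintro rfl
      apply he0
      apply Subtype.ext
      apply hinj
      rw [hu, zero_smul, ZeroMemClass.coe_zero, map_zero]
    obtain ⟨c, hc⟩ := hprime (u' / u) (z + d • e : N) e (by
      rw [div_pow]
      rw [div_eq_div_iff (pow_ne_zero _ hu0) hu0]
      have : (u' ^ p * u - u' * u ^ p) * α = 0 := by
        linear_combination u * hu2 - u' * hu1
      exact sub_eq_zero.1 ((mul_eq_zero.1 this).resolve_right hα0)) (by
      rw [hu', hu, smul_smul, div_mul_cancel₀ _ hu0])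
    apply hzW
    have hc' : z + d • e = c • e := Subtype.ext hc
    refine Submodule.mem_span_singleton.2 ⟨c - d, ?_⟩
    rw [sub_smul, ← hc']
    abel
  · -- the image of the line through `x` spans at least a plane: the scalar is constant
    push Not at hline
    obtain ⟨d, hd⟩ := hline
    have hind : ∀ c : k, (∀ u : E, φ (c • x) ≠ u • φ x) → ∀ r s : E,
        r • φ x + s • φ (c • x) = 0 → r = 0 ∧ s = 0 := by
      intro c hc r s h
      have hs : s = 0 := by
        by_contra hs
        apply hc (-(s⁻¹ * r))
        rw [neg_smul, mul_smul, eq_neg_of_add_eq_zero_left h, smul_neg, neg_neg, smul_smul,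
          inv_mul_cancel₀ hs, one_smul]
      rw [hs, zero_smul, add_zero] at h
      exact ⟨(smul_eq_zero.1 h).resolve_right hy0, hs⟩
    have hpc : ∀ c : k, φ (c ^ p • pH x) = pG (φ (c • x)) := fun c => by rw [← hpH, hφp]
    have hx1 : φ (pH x) = α • φ x := by rw [hφp, hα]
    have hout : ∀ c : k, (∀ u : E, φ (c • x) ≠ u • φ x) →
        φ (c ^ p • pH x) = α • φ (c • x) := by
      intro c hc
      obtain ⟨β, hβ⟩ := hG (φ (c • x))
      obtain ⟨γ, hγ⟩ := hG (φ ((c + 1) • x))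
      rw [← hpc] at hβ hγ
      rw [add_pow_char, one_pow, add_smul, add_smul, one_smul, one_smul, map_add, map_add, hβ,
        hx1, smul_add] at hγ
      have h := hind c hc (α - γ) (β - γ) (by
        rw [sub_smul, sub_smul]
        rw [← sub_eq_zero] at hγ
        rw [← hγ]
        abel)
      rw [hβ, sub_eq_zero.1 h.2, sub_eq_zero.1 h.1]
    have hall : ∀ c : k, φ (c ^ p • pH x) = α • φ (c • x) := by
      intro c
      by_cases hc : ∀ u : E, φ (c • x) ≠ u • φ x
      · exact hout c hc
      · push Not at hc
        obtain ⟨u, hu⟩ := hc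
        have h1 := hout (c + d) (by
          intro r hr
          apply hd (r - u)
          rw [add_smul, map_add, hu] at hr
          rw [sub_smul, ← hr]
          abel)
        rw [add_pow_char, add_smul, add_smul, map_add, map_add, hout d hd, smul_add] at h1
        exact add_right_cancel h1
    have hall2 : ∀ c : k, φ ((c ^ p) ^ p • pH (pH x)) = (α ^ p * α) • φ (c • x) := by
      intro c
      rw [← hpH, hφp, hall, hpG, ← hpc, hall, smul_smul]
    have hd0 : d ≠ 0 := by
      rintro rfl
      exact hd 0 (by simp)
    obtain ⟨μ, hμ⟩ := IsAlgClosed.exists_pow_nat_eq d⁻¹ (n := p - 1) (by omega)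
    have hμ0 : μ ≠ 0 := by
      rintro rfl
      rw [zero_pow (by omega)] at hμ
      exact inv_ne_zero hd0 hμ.symm
    obtain ⟨c, hc⟩ : ∃ c, μ * c = d := ⟨μ⁻¹ * d, by rw [mul_inv_cancel_left₀ hμ0]⟩
    have hc1 : μ ^ p * c = 1 := by
      have : μ ^ p = μ ^ (p - 1) * μ := by rw [← pow_succ]; congr 1; omega
      rw [this, hμ, mul_assoc, hc, inv_mul_cancel₀ hd0]
    have hw : pH (c • x + c ^ p • pH x) = c ^ p • pH x + (c ^ p) ^ p • pH (pH x) := by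
      apply hinj
      have h1 : φ (c • x + c ^ p • pH x) = (1 + α) • φ (c • x) := by
        rw [map_add, hall, add_smul, one_smul]
      rw [hφp, h1, hpG, ← hpc, hall, map_add, hall, hall2, add_pow_char, one_pow, smul_smul,
        add_mul, one_mul, add_smul]
    have hw2 : pH (μ ^ p • (c • x + c ^ p • pH x)) = pH x + (d ^ p) ^ p • pH (pH x) := by
      rw [hpH, hw, smul_add, smul_smul, smul_smul, ← mul_pow, hc1, one_pow, one_smul, ← mul_pow,
        ← mul_pow, hc]
    have hw3 : φ (μ ^ p • (c • x + c ^ p • pH x)) = φ x + α • φ (d • x) := by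
      rw [smul_add, smul_smul, smul_smul, hc1, one_smul, ← mul_pow, hc, map_add, hall]
    obtain ⟨β, hβ⟩ := hG (φ (μ ^ p • (c • x + c ^ p • pH x)))
    rw [← hφp, hw2, hw3, map_add, hx1, hall2, smul_add, smul_smul] at hβ
    have h := hind d hd (α - β) (α ^ p * α - β * α) (by
      rw [sub_smul, sub_smul]
      rw [← sub_eq_zero] at hβ
      rw [← hβ]
      abel)
    have hαp : α ^ p = α := by
      have h1 := h.2
      rw [← sub_eq_zero.1 h.1] at h1
      rcases eq_or_ne α 0 with h0 | h0
      · rw [h0, zero_pow (by omega)]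
      · exact mul_right_cancel₀ h0 (sub_eq_zero.1 h1)
    exact hprime α (pH x) x hαp hx1

/-- Let `k ⊂ E` be a field extension with `k` algebraically closed, `H` a
finite-dimensional restricted Lie algebra over `k` (with `p`-map `pH`), `G` a
restricted Lie algebra over `E` (with `p`-map `pG`), and `φ : H → G` an injective
homomorphism of restricted Lie algebras over `k`.  If every vector of `G` is
`p`-closed over `E`, then every vector of `H` is `p`-closed over `k`. -/
theorem stmt11 {k E : Type*} [Field k] [IsAlgClosed k] [Field E] [Algebra k E]
    (p : ℕ) [Fact p.Prime] [CharP k p]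
    {H G : Type*} [LieRing H] [LieAlgebra k H] [FiniteDimensional k H]
    [LieRing G] [LieAlgebra E G] [Module k G] [LieAlgebra k G] [IsScalarTower k E G]
    (pH : H → H) (pG : G → G)
    (hpH : ∀ (c : k) (x : H), pH (c • x) = c ^ p • pH x)
    (hpG : ∀ (c : E) (y : G), pG (c • y) = c ^ p • pG y)
    (φ : H →ₗ⁅k⁆ G) (hinj : Function.Injective φ)
    (hφp : ∀ x : H, φ (pH x) = pG (φ x))
    (hG : ∀ y : G, ∃ α : E, pG y = α • y) :
    ∀ x : H, ∃ c : k, pH x = c • x := by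
  have : CharP E p := charP_of_injective_algebraMap (algebraMap k E).injective p
  exact p_closed_aux p pH pG hpH hpG (AddMonoidHomClass.toAddMonoidHom φ) hinj hφp hG
end

section
/- Let k be a field of characteristic p > 0 and g the restricted Lie algebra with underlying space k[t]/(t^p) acting by derivations f∂ on k[t]/(t^p), bracket [t^i∂, t^j∂] = (j−i)t^{i+j−1}∂. If p ≥ 3, then g is a simple Lie algebra. -/
/-- The Witt algebra `Der_k(k[t]/(t^p))` of derivations of the truncated polynomial
ring `k[t]/(t^p)`. -/
noncomputable abbrev WittAlg (k : Type*) [Field k] (p : ℕ) : Type _ :=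
  Derivation k (AdjoinRoot ((Polynomial.X : Polynomial k) ^ p))
    (AdjoinRoot ((Polynomial.X : Polynomial k) ^ p))

open Polynomial in
lemma witt_exists (k : Type*) [Field k] (p : ℕ) [CharP k p] :
    ∃ D : WittAlg k p, ∀ q : k[X], D (AdjoinRoot.mk (X ^ p) q) =
      AdjoinRoot.mk (X ^ p) (derivative q) := by
  have hd : ∀ x : k[X], AdjoinRoot.mkₐ (R := k) ((X : k[X]) ^ p) x = 0 →
      AdjoinRoot.mkₐ (R := k) ((X : k[X]) ^ p) (derivative' (R := k) x) = 0 := by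
    intro x hx
    change AdjoinRoot.mk _ x = 0 at hx
    change AdjoinRoot.mk _ (derivative x) = 0
    rw [AdjoinRoot.mk_eq_zero] at hx ⊢
    obtain ⟨y, rfl⟩ := hx
    refine ⟨derivative y, ?_⟩
    simp [derivative_mul, derivative_X_pow]
  have hs : Function.Surjective (AdjoinRoot.mkₐ (R := k) ((X : k[X]) ^ p)) :=
    AdjoinRoot.mk_surjective
  exact ⟨Derivation.liftOfSurjective hs hd,
    fun q => Derivation.liftOfSurjective_apply hs hd q⟩

open Polynomial in
lemma witt_eq (k : Type*) [Field k] (p : ℕ) (D : WittAlg k p)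
    (hD : ∀ q : k[X], D (AdjoinRoot.mk (X ^ p) q) = AdjoinRoot.mk (X ^ p) (derivative q))
    (E : WittAlg k p) : E = E (AdjoinRoot.root (X ^ p)) • D := by
  refine Derivation.ext_of_adjoin_eq_top _ (AdjoinRoot.adjoinRoot_eq_top) ?_
  intro x hx
  rw [Set.mem_singleton_iff] at hx
  subst hx
  have := hD X
  rw [AdjoinRoot.mk_X] at this
  simp [this]

open Polynomial in
lemma witt_bracket (k : Type*) [Field k] (p : ℕ) (D : WittAlg k p)
    (hD : ∀ q : k[X], D (AdjoinRoot.mk (X ^ p) q) = AdjoinRoot.mk (X ^ p) (derivative q))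
    (q r : k[X]) : ⁅AdjoinRoot.mk (X ^ p) q • D, AdjoinRoot.mk (X ^ p) r • D⁆ =
      AdjoinRoot.mk (X ^ p) (q * derivative r - r * derivative q) • D := by
  ext a
  rw [Derivation.commutator_apply]
  simp only [Derivation.smul_apply, smul_eq_mul, Derivation.leibniz, hD, map_sub, map_mul]
  ring

open Polynomial in
lemma witt_one_mem (k : Type*) [Field k] (p : ℕ) [Fact p.Prime] [CharP k p]
    (S : Submodule k k[X]) (hS : ∀ q ∈ S, derivative q ∈ S) (n : ℕ) :
    ∀ q ∈ S, q ≠ 0 → q.natDegree = n → n < p → (1 : k[X]) ∈ S := by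
  induction n using Nat.strong_induction_on with
  | _ n ih =>
    intro q hq h0 hn hp
    by_cases hn0 : n = 0
    · subst hn0
      rw [natDegree_eq_zero] at hn
      obtain ⟨c, rfl⟩ := hn
      have hc : c ≠ 0 := by rintro rfl; simp at h0
      have := S.smul_mem c⁻¹ hq
      rwa [smul_C, smul_eq_mul, inv_mul_cancel₀ hc, C_1] at this
    · refine ih _ ?_ _ (hS q hq) ?_ rfl ?_
      · rw [← hn]; exact natDegree_derivative_lt (by omega)
      · intro h
        have h1 := congrArg (fun f => coeff f (n - 1)) h
        simp only [coeff_derivative, coeff_zero] at h1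
        have h2 : ((n - 1 : ℕ) : k) + 1 = (n : k) := by
          rw [← Nat.cast_succ]; congr 1; omega
        rw [h2, show n - 1 + 1 = n by omega, mul_eq_zero] at h1
        rcases h1 with h1 | h1
        · rw [← hn] at h1
          exact h0 (leadingCoeff_eq_zero.mp h1)
        · rw [CharP.cast_eq_zero_iff k p] at h1
          exact absurd (Nat.le_of_dvd (by omega) h1) (by omega)
      · have := natDegree_derivative_lt (p := q) (by omega)
        omega

set_option maxHeartbeats 1000000 in
/-- For `p ≥ 3`, the Witt algebra `g = Der_k(k[t]/(t^p))` is a simple Lie algebra: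
it is nonzero and its only Lie ideals are `0` and `g`. -/
theorem stmt18 {k : Type*} [Field k] (p : ℕ) [Fact p.Prime] [CharP k p] (hp : 3 ≤ p) :
    Nontrivial (WittAlg k p) ∧
    ∀ I : LieIdeal k (WittAlg k p), I = ⊥ ∨ I = ⊤ := by
  obtain ⟨D, hD⟩ := witt_exists k p
  have hpp : p.Prime := Fact.out
  have hmonic : ((Polynomial.X : Polynomial k) ^ p).Monic := Polynomial.monic_X_pow p
  have hD1 : D (AdjoinRoot.mk _ Polynomial.X) = 1 := by rw [hD]; simp
  have hnt : Nontrivial (AdjoinRoot ((Polynomial.X : Polynomial k) ^ p)) := by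
    apply AdjoinRoot.nontrivial
    simp [hpp.ne_zero]
  refine ⟨⟨D, 0, fun h => ?_⟩, fun I => ?_⟩
  · rw [h] at hD1
    simp at hD1
  by_cases hI : I = ⊥
  · exact Or.inl hI
  right
  obtain ⟨E, hE, hE0⟩ : ∃ E ∈ I, E ≠ 0 := by
    by_contra! hcon
    exact hI ((LieSubmodule.eq_bot_iff I).mpr hcon)
  let S : Submodule k (Polynomial k) :=
    { carrier := {q | AdjoinRoot.mk (Polynomial.X ^ p) q • D ∈ I}
      zero_mem' := by
        change AdjoinRoot.mk (Polynomial.X ^ p) 0 • D ∈ I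
        rw [map_zero, zero_smul]
        exact I.zero_mem
      add_mem' := by
        intro a b ha hb
        change AdjoinRoot.mk (Polynomial.X ^ p) (a + b) • D ∈ I
        rw [map_add, add_smul]
        exact I.add_mem ha hb
      smul_mem' := by
        intro c a ha
        change AdjoinRoot.mk (Polynomial.X ^ p) (c • a) • D ∈ I
        rw [← AdjoinRoot.smul_mk, smul_assoc]
        exact I.smul_mem c ha }
  have memS : ∀ q, q ∈ S ↔ AdjoinRoot.mk (Polynomial.X ^ p) q • D ∈ I := fun q => Iff.rfl
  have hbr : ∀ q r, q ∈ S →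
      r * Polynomial.derivative q - q * Polynomial.derivative r ∈ S := by
    intro q r hq
    rw [memS, ← witt_bracket k p D hD]
    exact lie_mem_right k _ I _ _ hq
  have hmod : ∀ x : AdjoinRoot ((Polynomial.X : Polynomial k) ^ p),
      ∃ q : Polynomial k, AdjoinRoot.mk _ q = x ∧ q.natDegree < p := by
    intro x
    obtain ⟨q, rfl⟩ := AdjoinRoot.mk_surjective x
    refine ⟨q %ₘ Polynomial.X ^ p, ?_, ?_⟩
    · rw [AdjoinRoot.mk_eq_mk, Polynomial.modByMonic_eq_sub_mul_div]
      exact ⟨-(q /ₘ Polynomial.X ^ p), by ring⟩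
    · have := Polynomial.natDegree_modByMonic_lt q hmonic
        (fun h => by
          have := congrArg Polynomial.natDegree h
          simp [hpp.ne_zero] at this)
      simpa using this
  have h1 : (1 : Polynomial k) ∈ S := by
    obtain ⟨q, hq, hdeg⟩ := hmod (E (AdjoinRoot.root _))
    refine witt_one_mem k p S (fun q hq => by simpa using hbr q 1 hq) _ q ?_ ?_ rfl hdeg
    · rw [memS, hq, ← witt_eq k p D hD]; exact hE
    · rintro rfl
      apply hE0
      rw [witt_eq k p D hD E, ← hq]; simp
  have hcast : ∀ j : ℕ, 0 < j → j < p → (j : k) ≠ 0 := by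
    intro j h0 hj h
    rw [CharP.cast_eq_zero_iff k p] at h
    exact absurd (Nat.le_of_dvd h0 h) (by omega)
  have hder : ∀ r, Polynomial.derivative r ∈ S := by
    intro r
    have := S.neg_mem (hbr 1 r h1)
    simpa using this
  have hpow : ∀ j, j + 1 < p → (Polynomial.X ^ j : Polynomial k) ∈ S := by
    intro j hj
    have h2 := S.smul_mem ((j + 1 : ℕ) : k)⁻¹ (hder (Polynomial.X ^ (j + 1)))
    rw [Polynomial.derivative_X_pow, ← Polynomial.smul_eq_C_mul, smul_smul,
      inv_mul_cancel₀ (hcast _ (by omega) hj), one_smul] at h2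
    simpa using h2
  have hX : (Polynomial.X : Polynomial k) ∈ S := by simpa using hpow 1 (by omega)
  have hlast : (Polynomial.X ^ (p - 1) : Polynomial k) ∈ S := by
    have h2 := hbr _ (Polynomial.X ^ (p - 1)) hX
    have h3 : (Polynomial.X ^ (p - 1) * Polynomial.derivative Polynomial.X
        - Polynomial.X * Polynomial.derivative (Polynomial.X ^ (p - 1)) : Polynomial k)
        = (2 : k) • Polynomial.X ^ (p - 1) := by
      obtain ⟨m, rfl⟩ : ∃ m, p = m + 2 := ⟨p - 2, by omega⟩
      have hc : ((m : k) + 2) = 0 := by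
        have := CharP.cast_eq_zero k (m + 2)
        exact_mod_cast this
      have hm : ((m + 1 : ℕ) : k) = -1 := by
        push_cast; linear_combination hc
      rw [show m + 2 - 1 = m + 1 by omega, Polynomial.derivative_X_pow, hm,
        Polynomial.smul_eq_C_mul, Polynomial.derivative_X]
      simp only [map_neg, Polynomial.C_1, Nat.add_sub_cancel, map_ofNat]
      ring
    rw [h3] at h2
    have h4 := S.smul_mem (2 : k)⁻¹ h2
    have h5 : (2 : k) ≠ 0 := by simpa using hcast 2 (by omega) (by omega)
    rwa [smul_smul, inv_mul_cancel₀ h5, one_smul] at h4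
  refine eq_top_iff.mpr fun F _ => ?_
  rw [witt_eq k p D hD F]
  obtain ⟨q, hq, hdeg⟩ := hmod (F (AdjoinRoot.root _))
  rw [← hq, ← memS, Polynomial.as_sum_range' q p hdeg]
  refine S.sum_mem fun i hi => ?_
  rw [Finset.mem_range] at hi
  rw [← Polynomial.C_mul_X_pow_eq_monomial, ← Polynomial.smul_eq_C_mul]
  refine S.smul_mem _ ?_
  by_cases h : i + 1 < p
  · exact hpow i h
  · rw [show i = p - 1 by omega]; exact hlast
end
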